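/- The rank of the normalized matrix of maximum out-forests equals the out-forest dimension and the rank of the Laplacian matrix is complementary: rank(J̃) = d' and rank(L) = n − d'. -/

import Mathlib

/-!
Write `m = n - d'` for the number of arcs of a maximum out-forest. The ranks follow from
`rank J̃ ≥ n - m`, `rank L ≥ m` and `J̃ L = 0`, the last of which gives `rank J̃ + rank L ≤ n`.

* `rank J̃ ≥ n - m` (`le_rank_Qmat`). Take a set `R` of minimum cardinality from which every vertex
  is reachable. A spanning forest grows from `R` with `n - |R|` arcs, so `|R| ≥ n - m`. No vertex
  reaches two elements of `R`, since it could replace both; thus the columns of `J̃` indexed by `R`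
  have disjoint supports, and they are nonzero because every vertex lies in a tree of a maximum
  out-forest.
* `rank L ≥ m` (`maxArcs_le_rank_Lap`). A vector `f` with `f L = 0` satisfies
  `∑ j, w_jv (f v - f j) = 0` for every `v`. By the maximum principle, `f` vanishes if it vanishes
  at the `n - m` roots of a maximum out-forest.
* `J̃ L = 0` (`Qmat_mul_Lap`). Expand `∑ j, w_jv (Q_iv - Q_ij)` over pairs of a maximum out-forest
  `F` and an arc `(j, v)`. If `j` descends from `v` in `F`, both lie in the same tree and the term is
  zero. Otherwise `v` has a parent `p` in `F` by maximality, and replacing `(p, v)` by `(j, v)` gives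
  a maximum out-forest which, paired with the arc `(p, v)`, contributes the opposite term.
-/

open Matrix Finset

namespace ForestMatrix

variable {n : ℕ}

/-- Reachability from `i` to `j` within a finite set `F` of arcs. -/
def FReach (F : Finset (Fin n × Fin n)) (i j : Fin n) : Prop :=
  Relation.ReflTransGen (fun a b => (a, b) ∈ F) i j

/-- `F` is (the arc set of) a spanning diverging forest (out-forest) of the digraph whose
positive arc weights are recorded in `W`: all arcs of `F` are arcs of the digraph, every
vertex has indegree at most one, and there are no directed cycles. -/
def IsOutForest (W : Matrix (Fin n) (Fin n) ℝ) (F : Finset (Fin n × Fin n)) : Prop :=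
  (∀ e ∈ F, 0 < W e.1 e.2) ∧
  (∀ v : Fin n, ({e ∈ F | e.2 = v} : Finset (Fin n × Fin n)).card ≤ 1) ∧
  (∀ v : Fin n, ¬ Relation.TransGen (fun a b => (a, b) ∈ F) v v)

/-- The weight of a (sub)digraph: the product of its arc weights. -/
noncomputable def wt (W : Matrix (Fin n) (Fin n) ℝ) (F : Finset (Fin n × Fin n)) : ℝ :=
  ∏ e ∈ F, W e.1 e.2

/-- The weight of a set of digraphs: the sum of their weights. -/
noncomputable def wtSet (W : Matrix (Fin n) (Fin n) ℝ)
    (G : Finset (Finset (Fin n × Fin n))) : ℝ :=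
  ∑ F ∈ G, wt W F

open scoped Classical in
/-- The set of all out-forests of the digraph with weight matrix `W`. -/
noncomputable def allOutForests (W : Matrix (Fin n) (Fin n) ℝ) :
    Finset (Finset (Fin n × Fin n)) :=
  Finset.univ.filter (fun F => IsOutForest W F)

open scoped Classical in
/-- The set of all out-forests with `k` arcs. -/
noncomputable def outForests (W : Matrix (Fin n) (Fin n) ℝ) (k : ℕ) :
    Finset (Finset (Fin n × Fin n)) :=
  Finset.univ.filter (fun F => IsOutForest W F ∧ F.card = k)

/-- The number of arcs of a maximum out-forest; it equals `n - d'` where `d'` is the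
out-forest dimension. -/
noncomputable def maxArcs (W : Matrix (Fin n) (Fin n) ℝ) : ℕ :=
  (allOutForests W).sup Finset.card

/-- `σ_k`: the total weight of the out-forests with `k` arcs. -/
noncomputable def sigma (W : Matrix (Fin n) (Fin n) ℝ) (k : ℕ) : ℝ :=
  wtSet W (outForests W k)

/-- `j` belongs to the tree of the forest `F` diverging from `i`:
`i` is a root of `F` and `j` is reachable from `i` in `F`. -/
def inTreeOf (F : Finset (Fin n × Fin n)) (i j : Fin n) : Prop :=
  (∀ e ∈ F, e.2 ≠ i) ∧ FReach F i j

open scoped Classical in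
/-- `Q_k`: the matrix of out-forests with `k` arcs; its `(i,j)` entry is the total weight of
the out-forests with `k` arcs in which `j` belongs to a tree diverging from `i`. -/
noncomputable def Qmat (W : Matrix (Fin n) (Fin n) ℝ) (k : ℕ) :
    Matrix (Fin n) (Fin n) ℝ :=
  fun i j => wtSet W ((outForests W k).filter (fun F => inTreeOf F i j))

/-- The column Laplacian matrix of the digraph with weight matrix `W`. -/
noncomputable def Lap (W : Matrix (Fin n) (Fin n) ℝ) : Matrix (Fin n) (Fin n) ℝ :=
  fun i j => if i = j then ∑ k ∈ Finset.univ.erase i, W k i else -W i j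

/-- `σ(τ) = Σ_{k=0}^{n-d'} σ_k τ^k`. -/
noncomputable def sigmaTau (W : Matrix (Fin n) (Fin n) ℝ) (τ : ℝ) : ℝ :=
  ∑ k ∈ Finset.range (maxArcs W + 1), sigma W k * τ ^ k

/-- `Q(τ) = Σ_{k=0}^{n-d'} Q_k τ^k`. -/
noncomputable def QTau (W : Matrix (Fin n) (Fin n) ℝ) (τ : ℝ) :
    Matrix (Fin n) (Fin n) ℝ :=
  ∑ k ∈ Finset.range (maxArcs W + 1), τ ^ k • Qmat W k

/-- `J(τ) = σ(τ)⁻¹ Q(τ)`. -/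
noncomputable def JTau (W : Matrix (Fin n) (Fin n) ℝ) (τ : ℝ) :
    Matrix (Fin n) (Fin n) ℝ :=
  (sigmaTau W τ)⁻¹ • QTau W τ

/-- `J̃ = σ_{n-d'}⁻¹ Q_{n-d'}`: the normalized matrix of maximum out-forests. -/
noncomputable def Jtil (W : Matrix (Fin n) (Fin n) ℝ) : Matrix (Fin n) (Fin n) ℝ :=
  (sigma W (maxArcs W))⁻¹ • Qmat W (maxArcs W)

/-- Reachability in the digraph with weight matrix `W`. -/
def Reach (W : Matrix (Fin n) (Fin n) ℝ) (i j : Fin n) : Prop :=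
  Relation.ReflTransGen (fun a b => 0 < W a b) i j

/-- `K` is a source knot of the digraph: `K` is the vertex set of a bicomponent
(a maximal strongly connected subgraph) and no arc enters `K` from outside. -/
def IsSourceKnot (W : Matrix (Fin n) (Fin n) ℝ) (K : Finset (Fin n)) : Prop :=
  (∃ i, ∀ j, j ∈ K ↔ (Reach W i j ∧ Reach W j i)) ∧
  (∀ j k, k ∈ K → 0 < W j k → j ∈ K)

/-! ### Reachability after inserting an arc -/

section Arcs

variable {F G : Finset (Fin n × Fin n)} {a v x y : Fin n}

theorem FReach.mono (h : F ⊆ G) (hxy : FReach F x y) : FReach G x y :=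
  Relation.ReflTransGen.mono (fun _ _ hab => h hab) _ _ hxy

/-- If `y` is not a descendant of `v`, no path ending at `y` uses an arc entering `v`. -/
theorem freach_of_insert_of_not_reach (hy : ¬ FReach (insert (a, v) G) v y)
    (hxy : FReach (insert (a, v) G) x y) : FReach G x y := by
  induction hxy with
  | refl => exact .refl
  | @tail b c hb hbc ih =>
    rcases Finset.mem_insert.1 hbc with h | h
    · obtain ⟨rfl, rfl⟩ := Prod.mk.inj h
      exact absurd .refl hy
    · exact (ih fun h' => hy (h'.tail hbc)).tail h

theorem freach_insert_self_iff :
    FReach (insert (a, v) G) v y ↔ FReach G v y := by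
  refine ⟨fun hxy => ?_, FReach.mono (Finset.subset_insert _ _)⟩
  induction hxy with
  | refl => exact .refl
  | @tail b c hb hbc ih =>
    rcases Finset.mem_insert.1 hbc with h | h
    · obtain ⟨rfl, rfl⟩ := Prod.mk.inj h
      exact .refl
    · exact ih.tail h

theorem transGen_insert
    (h : Relation.TransGen (fun b c => (b, c) ∈ insert (a, v) G) x y) :
    Relation.TransGen (fun b c => (b, c) ∈ G) x y ∨ (FReach G x a ∧ FReach G v y) := by
  induction h with
  | @single c hc =>
    rcases Finset.mem_insert.1 hc with h | h
    · obtain ⟨rfl, rfl⟩ := Prod.mk.inj h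
      exact .inr ⟨.refl, .refl⟩
    · exact .inl (.single h)
  | @tail b c hb hbc ih =>
    rcases Finset.mem_insert.1 hbc with h | h
    · obtain ⟨rfl, rfl⟩ := Prod.mk.inj h
      exact .inr ⟨ih.elim (fun t => t.to_reflTransGen) (fun t => t.1), .refl⟩
    · exact ih.elim (fun t => .inl (t.tail h)) (fun t => .inr ⟨t.1, t.2.tail h⟩)

/-- Only descendants of `v` can change trees when an arc entering `v` is added; the other effect
is that `v` stops being a root. The right-hand side does not involve the tail `a`. -/
theorem inTreeOf_insert_iff {i : Fin n} (hy : ¬ FReach G v y) :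
    inTreeOf (insert (a, v) G) i y ↔ i ≠ v ∧ inTreeOf G i y := by
  have hy' : ¬ FReach (insert (a, v) G) v y := by rwa [freach_insert_self_iff]
  constructor
  · rintro ⟨h1, h2⟩
    exact ⟨fun h => h1 _ (Finset.mem_insert_self _ _) h.symm,
      fun e he => h1 e (Finset.mem_insert_of_mem he), freach_of_insert_of_not_reach hy' h2⟩
  · rintro ⟨h0, h1, h2⟩
    refine ⟨fun e he => ?_, h2.mono (Finset.subset_insert _ _)⟩
    rcases Finset.mem_insert.1 he with rfl | he
    · exact h0.symm
    · exact h1 e he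

end Arcs

/-! ### Out-forests -/

section Forest

variable {W : Matrix (Fin n) (Fin n) ℝ} {F G : Finset (Fin n × Fin n)} {a v : Fin n}

theorem IsOutForest.tail_unique (hF : IsOutForest W F) {p q : Fin n}
    (hp : (p, v) ∈ F) (hq : (q, v) ∈ F) : p = q := by
  have := Finset.card_le_one.1 (hF.2.1 v) (p, v) (by simp [hp]) (q, v) (by simp [hq])
  exact (Prod.mk.inj this).1

theorem IsOutForest.subset (hF : IsOutForest W F) (h : G ⊆ F) : IsOutForest W G :=
  ⟨fun e he => hF.1 e (h he),
    fun v => (Finset.card_le_card (Finset.filter_subset_filter _ h)).trans (hF.2.1 v),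
    fun v hv => hF.2.2 v (Relation.TransGen.mono (fun _ _ hab => h hab) _ _ hv)⟩

theorem IsOutForest.insert (hG : IsOutForest W G) (hw : 0 < W a v)
    (hroot : ∀ e ∈ G, e.2 ≠ v) (hr : ¬ FReach G v a) : IsOutForest W (insert (a, v) G) := by
  refine ⟨fun e he => ?_, fun u => ?_, fun u hu => ?_⟩
  · rcases Finset.mem_insert.1 he with rfl | he
    · exact hw
    · exact hG.1 e he
  · rw [Finset.filter_insert]
    split_ifs with h
    · have : ({e ∈ G | e.2 = u} : Finset (Fin n × Fin n)) = ∅ := by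
        refine Finset.filter_eq_empty_iff.2 fun e he => ?_
        rw [← h]; exact hroot e he
      simp [this]
    · exact hG.2.1 u
  · rcases transGen_insert hu with h | ⟨h1, h2⟩
    · exact hG.2.2 u h
    · exact hr (h2.trans h1)

theorem IsOutForest.exists_root (hF : IsOutForest W F) (j : Fin n) :
    ∃ i, inTreeOf F i j := by
  let r : Fin n → Fin n → Prop := Relation.TransGen (fun a b => (a, b) ∈ F)
  have : IsTrans (Fin n) r := ⟨fun _ _ _ => Relation.TransGen.trans⟩
  have : Std.Irrefl r := ⟨hF.2.2⟩
  have wf : WellFounded r := Finite.wellFounded_of_trans_of_irrefl r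
  induction j using wf.induction with
  | _ j ih =>
    by_cases h : ∃ p, (p, j) ∈ F
    · obtain ⟨p, hp⟩ := h
      obtain ⟨i, hi, hip⟩ := ih p (.single hp)
      exact ⟨i, hi, hip.tail hp⟩
    · exact ⟨j, fun e he hej => h ⟨e.1, by rw [← hej]; exact he⟩, .refl⟩

theorem IsOutForest.inTreeOf_iff_tail (hF : IsOutForest W F) (hav : (a, v) ∈ F) {i : Fin n} :
    inTreeOf F i v ↔ inTreeOf F i a := by
  refine ⟨fun ⟨h1, h2⟩ => ⟨h1, ?_⟩, fun ⟨h1, h2⟩ => ⟨h1, h2.tail hav⟩⟩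
  rcases Relation.ReflTransGen.cases_tail h2 with h | ⟨b, hb, hbv⟩
  · exact absurd h (h1 _ hav)
  · rwa [hF.tail_unique hav hbv]

/-- A vertex and its descendants lie in the same tree. -/
theorem IsOutForest.inTreeOf_iff_of_freach (hF : IsOutForest W F) {i j : Fin n}
    (h : FReach F v j) : inTreeOf F i v ↔ inTreeOf F i j := by
  induction h with
  | refl => rfl
  | tail _ hbc ih => rw [ih, hF.inTreeOf_iff_tail hbc]

theorem IsOutForest.card_heads (hF : IsOutForest W F) :
    (F.image Prod.snd).card = F.card := by
  refine Finset.card_image_of_injOn ?_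
  rintro ⟨p, v⟩ hp ⟨q, u⟩ hq (rfl : v = u)
  rw [hF.tail_unique hp hq]

theorem IsOutForest.reach (hF : IsOutForest W F) {i j : Fin n} (h : FReach F i j) :
    Reach W i j :=
  Relation.ReflTransGen.mono (fun _ _ hab => hF.1 _ hab) _ _ h

theorem IsOutForest.wt_pos (hF : IsOutForest W F) : 0 < wt W F :=
  Finset.prod_pos hF.1

theorem IsOutForest.card_le (hF : IsOutForest W F) : F.card ≤ maxArcs W :=
  Finset.le_sup (f := Finset.card) (by simpa [allOutForests] using hF)

theorem isOutForest_empty : IsOutForest W ∅ := by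
  refine ⟨by simp, by simp, fun v hv => ?_⟩
  obtain ⟨b, hb, _⟩ := Relation.TransGen.head'_iff.1 hv
  simp at hb

theorem mem_outForests {k : ℕ} : F ∈ outForests W k ↔ IsOutForest W F ∧ F.card = k := by
  simp [outForests]

theorem exists_max (W : Matrix (Fin n) (Fin n) ℝ) :
    ∃ F, IsOutForest W F ∧ F.card = maxArcs W := by
  obtain ⟨F, hF, h⟩ := Finset.exists_mem_eq_sup (allOutForests W)
    ⟨∅, by simpa [allOutForests] using isOutForest_empty⟩ Finset.card
  exact ⟨F, by simpa [allOutForests] using hF, h.symm⟩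

theorem sigma_max_pos (W : Matrix (Fin n) (Fin n) ℝ) : 0 < sigma W (maxArcs W) := by
  obtain ⟨F, hF, hc⟩ := exists_max W
  exact Finset.sum_pos (fun G hG => (mem_outForests.1 hG).1.wt_pos)
    ⟨F, mem_outForests.2 ⟨hF, hc⟩⟩

open scoped Classical in
theorem Qmat_ne_zero_iff {k : ℕ} {i j : Fin n} :
    Qmat W k i j ≠ 0 ↔ ∃ F, IsOutForest W F ∧ F.card = k ∧ inTreeOf F i j := by
  constructor
  · intro h
    obtain ⟨F, hF, -⟩ := Finset.exists_ne_zero_of_sum_ne_zero h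
    rw [Finset.mem_filter, mem_outForests] at hF
    exact ⟨F, hF.1.1, hF.1.2, hF.2⟩
  · rintro ⟨F, h1, h2, h3⟩
    refine (Finset.sum_pos (fun G hG => ?_) ⟨F, ?_⟩).ne'
    · exact (mem_outForests.1 (Finset.mem_filter.1 hG).1).1.wt_pos
    · rw [Finset.mem_filter, mem_outForests]
      exact ⟨⟨h1, h2⟩, h3⟩

end Forest

/-! ### Dominating sets and the lower bound on the rank of `J̃` -/

section Dominating

variable {W : Matrix (Fin n) (Fin n) ℝ}

/-- If every vertex is reachable from `R`, a forest can be grown from `R`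
one arc at a time until it has `n - |R|` arcs. The last clause is the induction invariant: every
vertex with an outgoing arc has already been attached. -/
theorem exists_forest_of_dominating {R : Finset (Fin n)}
    (hR : ∀ v, ∃ r ∈ R, Reach W r v) (k : ℕ) (hk : R.card + k ≤ n) :
    ∃ F, IsOutForest W F ∧ F.card = k ∧ ∀ e ∈ F, e.1 ∈ R ∪ F.image Prod.snd := by
  induction k with
  | zero => exact ⟨∅, isOutForest_empty, rfl, by simp⟩
  | succ k ih =>
    obtain ⟨F, hF, hc, ht⟩ := ih (by omega)
    set A := R ∪ F.image Prod.snd with hA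
    obtain ⟨v, hv⟩ : ∃ v, v ∉ A := by
      by_contra! h
      have h1 : A.card ≤ R.card + (F.image Prod.snd).card := Finset.card_union_le _ _
      rw [Finset.eq_univ_of_forall h, hF.card_heads, Finset.card_univ, Fintype.card_fin] at h1
      omega
    obtain ⟨r, hr, hrv⟩ := hR v
    have hcross : v ∉ A → ∃ a b, a ∈ A ∧ b ∉ A ∧ 0 < W a b := by
      clear hv
      induction hrv with
      | refl => exact fun h => absurd (Finset.mem_union_left _ hr) h
      | @tail b c _ hbc ih =>
        intro hcA
        by_cases hb : b ∈ A
        · exact ⟨b, c, hb, hcA, hbc⟩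
        · exact ih hb
    obtain ⟨a, b, ha, hb, hab⟩ := hcross hv
    have hbh : ∀ e ∈ F, e.2 ≠ b := fun e he h =>
      hb (Finset.mem_union_right _ (Finset.mem_image.2 ⟨e, he, h⟩))
    refine ⟨insert (a, b) F, hF.insert hab hbh ?_, ?_, ?_⟩
    · intro h
      rcases Relation.ReflTransGen.cases_head h with h | ⟨c, hc, -⟩
      · exact hb (h ▸ ha)
      · exact hb (ht _ hc)
    · rw [Finset.card_insert_of_notMem fun h => hbh _ h rfl, hc]
    · have hsub : A ⊆ R ∪ (insert (a, b) F).image Prod.snd :=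
        Finset.union_subset_union_right (Finset.image_subset_image (Finset.subset_insert _ _))
      intro e he
      rcases Finset.mem_insert.1 he with rfl | he
      · exact hsub ha
      · exact hsub (ht e he)

open scoped Classical in
/-- A dominating set of minimum cardinality: no vertex reaches two of its members, since that
vertex could replace both of them. -/
theorem exists_min_dominating (W : Matrix (Fin n) (Fin n) ℝ) :
    ∃ R : Finset (Fin n), (∀ v, ∃ r ∈ R, Reach W r v) ∧
      ∀ i, ∀ r ∈ R, ∀ r' ∈ R, Reach W i r → Reach W i r' → r = r' := by
  obtain ⟨R, hR, hmin⟩ := Finset.exists_min_image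
    (Finset.univ.filter fun R : Finset (Fin n) => ∀ v, ∃ r ∈ R, Reach W r v) Finset.card
    ⟨Finset.univ, by simpa using fun v => ⟨v, .refl⟩⟩
  simp only [Finset.mem_filter, Finset.mem_univ, true_and] at hR hmin
  refine ⟨R, hR, fun i r hr r' hr' h h' => ?_⟩
  by_contra hne
  have := hmin (insert i ((R.erase r).erase r')) fun v => by
    obtain ⟨s, hs, hsv⟩ := hR v
    by_cases h1 : s = r
    · exact ⟨i, Finset.mem_insert_self _ _, (h1 ▸ h).trans hsv⟩
    by_cases h2 : s = r'
    · exact ⟨i, Finset.mem_insert_self _ _, (h2 ▸ h').trans hsv⟩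
    · exact ⟨s, by simp [h1, h2, hs], hsv⟩
  have h1 := Finset.card_insert_le i ((R.erase r).erase r')
  have h2 := Finset.card_erase_add_one (Finset.mem_erase.2 ⟨Ne.symm hne, hr'⟩)
  have h3 := Finset.card_erase_add_one hr
  omega

/-- For a minimum dominating set `R`, the columns of `Q_{n-d'}` indexed by `R` are nonzero with
pairwise disjoint supports, and `n - |R|` is a possible number of arcs, so `|R| ≥ d'`. -/
theorem le_rank_Qmat (W : Matrix (Fin n) (Fin n) ℝ) :
    n - maxArcs W ≤ (Qmat W (maxArcs W)).rank := by
  obtain ⟨R, hR, hsep⟩ := exists_min_dominating W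
  have hRn : R.card ≤ n := by simpa using Finset.card_le_univ R
  obtain ⟨F, hF, hc, -⟩ := exists_forest_of_dominating hR (n - R.card) (by omega)
  have h1 := hF.card_le
  obtain ⟨M, hM, hMc⟩ := exists_max W
  choose ρ hρ using hM.exists_root
  have hli : LinearIndependent ℝ fun r : R => (Qmat W (maxArcs W)).col r := by
    rw [Fintype.linearIndependent_iff]
    intro c hsum r
    have h := congrFun hsum (ρ r)
    rw [Finset.sum_apply, Finset.sum_eq_single r] at h
    · exact (mul_eq_zero.1 h).resolve_right (Qmat_ne_zero_iff.2 ⟨M, hM, hMc, hρ r⟩)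
    · intro r' _ hne
      refine mul_eq_zero_of_right _ ?_
      by_contra hq
      obtain ⟨F', hF', -, -, hreach⟩ := Qmat_ne_zero_iff.1 hq
      exact hne (Subtype.ext
        (hsep (ρ r) r' r'.2 r r.2 (hF'.reach hreach) (hM.reach (hρ r).2)))
    · simp
  have h2 : R.card ≤ (Qmat W (maxArcs W)).rank := by
    rw [Matrix.rank_eq_finrank_span_cols]
    have := finrank_span_eq_card hli
    rw [Fintype.card_coe] at this
    rw [← this]
    refine Submodule.finrank_mono (Submodule.span_mono ?_)
    rintro _ ⟨r, rfl⟩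
    exact ⟨_, rfl⟩
  omega

end Dominating

/-! ### The maximum principle and the lower bound on the rank of `L` -/

section Laplacian

variable {W : Matrix (Fin n) (Fin n) ℝ}

theorem sum_mul_Lap (f : Fin n → ℝ) (v : Fin n) :
    ∑ j, f j * Lap W j v = ∑ j, W j v * (f v - f j) := by
  rw [← Finset.add_sum_erase _ _ (Finset.mem_univ v),
    ← Finset.add_sum_erase _ (fun j => W j v * (f v - f j)) (Finset.mem_univ v)]
  have h : ∀ j ∈ Finset.univ.erase v, f j * Lap W j v = -(W j v * f j) := fun j hj => by
    rw [Lap, if_neg (Finset.ne_of_mem_erase hj)]; ring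
  rw [Finset.sum_congr rfl h]
  simp only [Lap, if_true, mul_sub, Finset.sum_sub_distrib, Finset.sum_neg_distrib,
    ← Finset.sum_mul]
  ring

/-- Maximum principle: the set where `f` attains its maximum is closed under predecessors, hence
contains the root of a tree of `F`, where `f` vanishes. -/
theorem harmonic_nonpos (hW0 : ∀ i j, 0 ≤ W i j) {F : Finset (Fin n × Fin n)}
    (hF : IsOutForest W F) {f : Fin n → ℝ}
    (hf : ∀ v, ∑ j, W j v * (f v - f j) = 0)
    (h0 : ∀ i, (∀ e ∈ F, e.2 ≠ i) → f i = 0) (v : Fin n) : f v ≤ 0 := by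
  obtain ⟨k, -, hk⟩ := Finset.exists_max_image Finset.univ f ⟨v, Finset.mem_univ v⟩
  have hk : ∀ j, f j ≤ f k := fun j => hk j (Finset.mem_univ j)
  obtain ⟨i, hi, hik⟩ := hF.exists_root k
  have key : ∀ j, Reach W j k → f j = f k := by
    intro j hj
    induction hj using Relation.ReflTransGen.head_induction_on with
    | refl => rfl
    | @head a b hab _ ih =>
      have hnn : ∀ j ∈ Finset.univ, 0 ≤ W j b * (f b - f j) := fun j _ =>
        mul_nonneg (hW0 j b) (by rw [ih]; linarith [hk j])
      have := (Finset.sum_eq_zero_iff_of_nonneg hnn).1 (hf b) a (Finset.mem_univ a)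
      rcases mul_eq_zero.1 this with h | h
      · exact absurd h (ne_of_gt hab)
      · linarith
  calc f v ≤ f k := hk v
    _ = f i := (key i (hF.reach hik)).symm
    _ ≤ 0 := (h0 i hi).le

/-- A left null vector of `L` is determined by its values at the `d'` roots of a maximum
out-forest, so the left kernel has dimension at most `d'`. -/
theorem maxArcs_le_rank_Lap (hW0 : ∀ i j, 0 ≤ W i j) : maxArcs W ≤ (Lap W).rank := by
  obtain ⟨F, hF, hc⟩ := exists_max W
  set H := F.image Prod.snd with hH
  let φ := (Lap W)ᵀ.mulVecLin
  let res : LinearMap.ker φ →ₗ[ℝ] ((Hᶜ : Finset (Fin n)) → ℝ) :=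
    (LinearMap.funLeft ℝ ℝ Subtype.val).comp (LinearMap.ker φ).subtype
  have hinj : Function.Injective res := by
    rw [← LinearMap.ker_eq_bot, LinearMap.ker_eq_bot']
    rintro ⟨f, hf⟩ hres
    have hharm : ∀ v, ∑ j, W j v * (f v - f j) = 0 := fun v => by
      rw [← sum_mul_Lap]
      have := congrFun (LinearMap.mem_ker.1 hf) v
      rw [Matrix.mulVecLin_apply, Matrix.mulVec_transpose] at this
      exact this
    have h0 : ∀ i, (∀ e ∈ F, e.2 ≠ i) → f i = 0 := fun i hi =>
      congrFun hres ⟨i, by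
        rw [Finset.mem_compl, hH, Finset.mem_image]
        rintro ⟨e, he, h⟩
        exact hi e he h⟩
    have hle := harmonic_nonpos hW0 hF hharm h0
    have hge := harmonic_nonpos hW0 hF (f := -f)
      (fun v => by
        rw [← neg_eq_zero, ← Finset.sum_neg_distrib, ← hharm v]
        exact Finset.sum_congr rfl fun j _ => by simp only [Pi.neg_apply]; ring)
      (fun i hi => by simp [h0 i hi])
    ext v
    have := hge v
    simp only [Pi.neg_apply] at this
    exact le_antisymm (hle v) (neg_nonpos.1 this)
  have h1 := LinearMap.finrank_le_finrank_of_injective hinj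
  have h2 := LinearMap.finrank_range_add_finrank_ker φ
  have h3 : Module.finrank ℝ (LinearMap.range φ) = (Lap W).rank := Matrix.rank_transpose _
  rw [Module.finrank_fintype_fun_eq_card, Fintype.card_coe, Finset.card_compl, Fintype.card_fin,
    hH, hF.card_heads, hc] at h1
  rw [Module.finrank_fintype_fun_eq_card, Fintype.card_fin, h3] at h2
  have h4 : maxArcs W ≤ n := by
    rw [← hc, ← hF.card_heads]
    simpa using Finset.card_le_univ (F.image Prod.snd)
  omega

end Laplacian

/-! ### The product of `J̃` and `L` vanishes -/

section Involution

variable {W : Matrix (Fin n) (Fin n) ℝ}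

open scoped Classical in
/-- The parent of `v` in `F`, i.e. the tail of an arc of `F` entering `v`; the value is `v` itself
when `v` is a root. -/
noncomputable def par (F : Finset (Fin n × Fin n)) (v : Fin n) : Fin n :=
  if h : ∃ p, (p, v) ∈ F then h.choose else v

theorem par_eq {F : Finset (Fin n × Fin n)} (hF : IsOutForest W F) {p v : Fin n}
    (h : (p, v) ∈ F) : par F v = p := by
  have hex : ∃ p, (p, v) ∈ F := ⟨p, h⟩
  rw [par, dif_pos hex]
  exact hF.tail_unique hex.choose_spec h

/-- In a maximum out-forest `F`, if an arc `(j, v)` of the digraph has a tail that is not a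
descendant of `v`, then `v` is not a root of `F` (otherwise the arc could be added). Removing the
arc that enters `v` leaves a forest `G` in which `v` is a root. -/
theorem exists_base {F : Finset (Fin n × Fin n)} {j v : Fin n} (hF : IsOutForest W F)
    (hc : F.card = maxArcs W) (hw : 0 < W j v) (hj : ¬ FReach F v j) :
    ∃ p G, F = insert (p, v) G ∧ (∀ e ∈ G, e.2 ≠ v) ∧ F.erase (par F v, v) = G ∧ par F v = p := by
  have hnr : ∃ p, (p, v) ∈ F := by
    by_contra! h
    have hroot : ∀ e ∈ F, e.2 ≠ v := fun e he hev => h e.1 (by rw [← hev]; exact he)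
    have := (hF.insert hw hroot hj).card_le
    rw [Finset.card_insert_of_notMem (h j)] at this
    omega
  obtain ⟨p, hp⟩ := hnr
  have hpar := par_eq hF hp
  refine ⟨p, F.erase (p, v), (Finset.insert_erase hp).symm, ?_, by rw [hpar], hpar⟩
  rintro ⟨q, u⟩ he (rfl : u = v)
  rw [Finset.mem_erase] at he
  exact he.1 (by rw [hF.tail_unique he.2 hp])

open scoped Classical in
/-- Each row of `Q_{n-d'}` is harmonic. The sum is over pairs of a maximum out-forest `F` and an
arc `(j, v)`; the terms cancel under the exchange of `(j, v)` with the arc of `F` entering `v`. -/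
theorem Qmat_harmonic (hW0 : ∀ i j, 0 ≤ W i j) (i v : Fin n) :
    ∑ j, W j v * (Qmat W (maxArcs W) i v - Qmat W (maxArcs W) i j) = 0 := by
  let χ : Finset (Fin n × Fin n) → Fin n → ℝ := fun F j => if inTreeOf F i j then 1 else 0
  let f : Finset (Fin n × Fin n) × Fin n → ℝ := fun x =>
    W x.2 v * (wt W x.1 * (χ x.1 v - χ x.1 x.2))
  have hQ : ∀ j, Qmat W (maxArcs W) i j = ∑ F ∈ outForests W (maxArcs W), wt W F * χ F j := by
    intro j
    simp [Qmat, wtSet, χ, Finset.sum_filter]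
  have hsum : ∑ j, W j v * (Qmat W (maxArcs W) i v - Qmat W (maxArcs W) i j)
      = ∑ x ∈ outForests W (maxArcs W) ×ˢ Finset.univ, f x := by
    rw [Finset.sum_product_right]
    refine Finset.sum_congr rfl fun j _ => ?_
    rw [hQ, hQ, ← Finset.sum_sub_distrib, Finset.mul_sum]
    exact Finset.sum_congr rfl fun F _ => by simp only [f]; ring
  rw [hsum]
  let s := (outForests W (maxArcs W) ×ˢ (Finset.univ : Finset (Fin n))).filter
    fun x => 0 < W x.2 v ∧ ¬ FReach x.1 v x.2
  have hs : ∀ x, x ∈ s ↔ (IsOutForest W x.1 ∧ x.1.card = maxArcs W) ∧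
      0 < W x.2 v ∧ ¬ FReach x.1 v x.2 := fun x => by
    simp [s, mem_outForests]
  -- A pair in which `j` descends from `v` contributes zero: `j` and `v` are in the same tree.
  rw [← Finset.sum_subset (Finset.filter_subset _ _ : s ⊆ _)]
  swap
  · rintro ⟨F, j⟩ hx hxs
    obtain ⟨hF, hc⟩ := mem_outForests.1 (Finset.mem_product.1 hx).1
    by_cases hw : 0 < W j v
    · have hr : FReach F v j := by
        by_contra hr
        exact hxs ((hs _).2 ⟨⟨hF, hc⟩, hw, hr⟩)
      have : χ F v = χ F j := by simp only [χ, hF.inTreeOf_iff_of_freach hr]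
      simp [f, this]
    · have : W j v = 0 := le_antisymm (not_lt.1 hw) (hW0 j v)
      simp [f, this]
  let g : Finset (Fin n × Fin n) × Fin n → Finset (Fin n × Fin n) × Fin n := fun x =>
    (insert (x.2, v) (x.1.erase (par x.1 v, v)), par x.1 v)
  have key : ∀ x ∈ s, f x + f (g x) = 0 ∧ g x ∈ s ∧ g (g x) = x := by
    rintro ⟨F, j⟩ hx
    obtain ⟨⟨hF, hc⟩, hw, hj⟩ := (hs _).1 hx
    obtain ⟨p, G, hFG, hG, hGe, hp⟩ := exists_base hF hc hw hj
    dsimp only at hF hc hw hj hFG hGe hp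
    have hg : g (F, j) = (insert (j, v) G, p) := by simp only [g, hGe]; rw [hp]
    have hGF : IsOutForest W G := hF.subset (hFG ▸ Finset.subset_insert _ _)
    have hjG : ¬ FReach G v j := fun h => hj (by rw [hFG, freach_insert_self_iff]; exact h)
    have hpF : (p, v) ∈ F := hFG ▸ Finset.mem_insert_self _ _
    have hpG : ¬ FReach G v p := fun h =>
      hF.2.2 v (Relation.TransGen.tail' (h.mono (hFG ▸ Finset.subset_insert _ _)) hpF)
    have hF' : IsOutForest W (insert (j, v) G) := hGF.insert hw hG hjG
    have hnot : ∀ q, (q, v) ∉ G := fun q h => hG _ h rfl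
    have hpar' : par (insert (j, v) G) v = j := par_eq hF' (Finset.mem_insert_self _ _)
    refine ⟨?_, ?_, ?_⟩
    · have e1 : χ F v = χ F p := by simp only [χ, hF.inTreeOf_iff_tail hpF]
      have e2 : χ (insert (j, v) G) v = χ (insert (j, v) G) j := by
        simp only [χ, hF'.inTreeOf_iff_tail (Finset.mem_insert_self _ _)]
      have e3 : χ F p = χ (insert (j, v) G) p := by
        simp only [χ, hFG, inTreeOf_insert_iff hpG]
      have e4 : χ F j = χ (insert (j, v) G) j := by
        simp only [χ, hFG, inTreeOf_insert_iff hjG]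
      have w1 : wt W F = W p v * wt W G := by
        rw [hFG, wt, Finset.prod_insert (hnot p)]; rfl
      have w2 : wt W (insert (j, v) G) = W j v * wt W G := by
        rw [wt, Finset.prod_insert (hnot j)]; rfl
      rw [hg]
      simp only [f, e1, e2, e3, e4, w1, w2]
      ring
    · rw [hg, hs]
      refine ⟨⟨hF', ?_⟩, hF.1 _ hpF, ?_⟩
      · rw [← hc, hFG, Finset.card_insert_of_notMem (hnot _),
          Finset.card_insert_of_notMem (hnot _)]
      · rwa [freach_insert_self_iff]
    · rw [hg]
      simp only [g, hpar', Finset.erase_insert (hnot j), ← hFG]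
  refine Finset.sum_involution (fun x _ => g x) (fun x hx => (key x hx).1) ?_
    (fun x hx => (key x hx).2.1) (fun x hx => (key x hx).2.2)
  -- At a fixed point of the exchange (the arc `(j, v)` is already in `F`) the term equals its own
  -- negative.
  intro x hx hne hgx
  have h := (key x hx).1
  rw [hgx] at h
  exact hne (by linarith)

theorem Qmat_mul_Lap (hW0 : ∀ i j, 0 ≤ W i j) : Qmat W (maxArcs W) * Lap W = 0 := by
  ext i v
  rw [Matrix.mul_apply, sum_mul_Lap]
  exact Qmat_harmonic hW0 i v

end Involution

/-- `rank(J̃) = d'` and `rank(L) = n − d'` (recall that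
`maxArcs W = n − d'`, so `d' = n − maxArcs W`). -/
theorem rank_Jtil_and_Lap (n : ℕ) (hn : 1 < n)
    (W : Matrix (Fin n) (Fin n) ℝ)
    (hW0 : ∀ i j, 0 ≤ W i j) (hWd : ∀ i, W i i = 0) :
    (Jtil W).rank = n - maxArcs W ∧ (Lap W).rank = maxArcs W := by
  have hJ : (Jtil W).rank = (Qmat W (maxArcs W)).rank :=
    Matrix.rank_smul_of_mem_nonZeroDivisors _
      (mem_nonZeroDivisors_of_ne_zero (inv_ne_zero (sigma_max_pos W).ne'))
  have h1 := le_rank_Qmat W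
  have h2 := maxArcs_le_rank_Lap hW0
  have h3 := Matrix.rank_add_rank_le_card_of_mul_eq_zero (Qmat_mul_Lap hW0)
  rw [Fintype.card_fin] at h3
  omega

end ForestMatrix
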